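/- Let (Φ₁,Φ₂) be a branching mechanism, V the unique solution of the cumulant equations (3.8), and H the moment matrix, and suppose that all eigenvalues of H have strictly negative real parts. Then for every λ ∈ [0,∞)² there exist strictly positive constants A(λ) and B(λ) such that V₁(t,λ) ≥ λ₁·e^{−A(λ)t} and V₂(t,λ) ≥ λ₂·e^{−B(λ)t} for all t ≥ 0. -/

import Mathlib

open MeasureTheory Filter Set

noncomputable section

/-- The state space `𝕄 = [0,∞) × ℕ`, as a subset of `ℝ²`. -/
def Mset : Set (ℝ × ℝ) := {z | 0 ≤ z.1 ∧ ∃ n : ℕ, z.2 = (n : ℝ)}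

/-- The space `𝕄₋₁ = [0,∞) × (ℕ ∪ {-1})`, as a subset of `ℝ²`. -/
def Mm1set : Set (ℝ × ℝ) := {z | 0 ≤ z.1 ∧ ∃ n : ℤ, (-1 : ℤ) ≤ n ∧ z.2 = (n : ℝ)}

/-- The data of a branching mechanism `(Φ₁, Φ₂)` of a mixed state branching process. -/
structure BranchingMechanism where
  a11 : ℝ
  a21 : ℝ
  alpha : ℝ
  a21_nonneg : 0 ≤ a21
  alpha_nonneg : 0 ≤ alpha
  n1 : Measure (ℝ × ℝ)
  n2 : Measure (ℝ × ℝ)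
  n1_sigmaFinite : SigmaFinite n1
  n2_sigmaFinite : SigmaFinite n2
  /-- `n₁` is supported on `𝕄` -/
  n1_supp : n1 Msetᶜ = 0
  /-- `n₂` is supported on `𝕄₋₁` -/
  n2_supp : n2 Mm1setᶜ = 0
  /-- `n₁` does not charge the origin -/
  n1_zero : n1 {0} = 0
  /-- `n₂` does not charge the origin -/
  n2_zero : n2 {0} = 0
  /-- `n₂([0,∞) × {-1}) < ∞` -/
  n2_neg1 : n2 {z : ℝ × ℝ | z.2 = -1} ≠ ⊤
  /-- `∫ (z₁ ∧ z₁² + z₂) n₁(dz) < ∞` -/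
  n1_moment : ∫⁻ z, ENNReal.ofReal (min z.1 (z.1 ^ 2) + z.2) ∂n1 ≠ ⊤
  /-- `∫ (z₁ + |z₂|) n₂(dz) < ∞` -/
  n2_moment : ∫⁻ z, ENNReal.ofReal (z.1 + |z.2|) ∂n2 ≠ ⊤

/-- `Φ₁(λ) = -a₁₁λ₁ - αλ₁² - ∫ (e^{-⟨λ,z⟩} - 1 + λ₁z₁) n₁(dz)`. -/
def mPhi1 (B : BranchingMechanism) (l : ℝ × ℝ) : ℝ :=
  -B.a11 * l.1 - B.alpha * l.1 ^ 2 -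
    ∫ z, (Real.exp (-(l.1 * z.1 + l.2 * z.2)) - 1 + l.1 * z.1) ∂B.n1

/-- `Φ₂(λ) = a₂₁λ₁ + ∫ (1 - e^{-⟨λ,z⟩}) n₂(dz)`. -/
def mPhi2 (B : BranchingMechanism) (l : ℝ × ℝ) : ℝ :=
  B.a21 * l.1 + ∫ z, (1 - Real.exp (-(l.1 * z.1 + l.2 * z.2))) ∂B.n2


/-- `V : t ↦ V(t,λ)` is a continuous `[0,∞)²`-valued solution of the cumulant
equations (3.8) with initial value `λ = l`. -/
def SolvesCumulant (B : BranchingMechanism) (l : ℝ × ℝ) (V : ℝ → ℝ × ℝ) : Prop :=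
  ContinuousOn V (Ici 0) ∧
  (∀ t : ℝ, 0 ≤ t → 0 ≤ (V t).1 ∧ 0 ≤ (V t).2) ∧
  (∀ t : ℝ, 0 ≤ t →
    (V t).1 = l.1 + ∫ s in (0:ℝ)..t, mPhi1 B (V s) ∧
    (V t).2 = l.2 + ∫ s in (0:ℝ)..t, mPhi2 B (V s))

/-- Entries of the moment matrix `H`. -/
def H11 (B : BranchingMechanism) : ℝ := -B.a11
def H12 (B : BranchingMechanism) : ℝ := ∫ z, z.2 ∂B.n1
def H21 (B : BranchingMechanism) : ℝ := B.a21 + ∫ z, z.1 ∂B.n2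
def H22 (B : BranchingMechanism) : ℝ := ∫ z, z.2 ∂B.n2

/-- The moment matrix `H` of a branching mechanism. -/
def Hmat (B : BranchingMechanism) : Matrix (Fin 2) (Fin 2) ℝ :=
  !![H11 B, H12 B; H21 B, H22 B]

namespace CumulantAux

lemma ae1 (B : BranchingMechanism) : ∀ᵐ z ∂B.n1, 0 ≤ z.1 ∧ 0 ≤ z.2 := by
  have h : ∀ᵐ z ∂B.n1, z ∈ Mset := B.n1_supp
  filter_upwards [h] with z hz
  obtain ⟨h1, n, hn⟩ := hz
  exact ⟨h1, by rw [hn]; positivity⟩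

lemma ae2 (B : BranchingMechanism) : ∀ᵐ z ∂B.n2, 0 ≤ z.1 ∧ (0 ≤ z.2 ∨ z.2 = -1) := by
  have h : ∀ᵐ z ∂B.n2, z ∈ Mm1set := B.n2_supp
  filter_upwards [h] with z hz
  obtain ⟨h1, n, hn, hz⟩ := hz
  refine ⟨h1, ?_⟩
  rcases hn.eq_or_lt with h | h
  · right; rw [hz, ← h]; norm_num
  · left; rw [hz]; exact_mod_cast (by omega : 0 ≤ n)

lemma int1 (B : BranchingMechanism) :
    Integrable (fun z : ℝ × ℝ => min z.1 (z.1 ^ 2)) B.n1 ∧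
    Integrable (fun z : ℝ × ℝ => z.2) B.n1 := by
  have h : Integrable (fun z : ℝ × ℝ => min z.1 (z.1 ^ 2) + z.2) B.n1 := by
    refine (lintegral_ofReal_ne_top_iff_integrable ?_ ?_).1 B.n1_moment
    · exact Measurable.aestronglyMeasurable (by fun_prop)
    · filter_upwards [ae1 B] with z hz
      have := le_min hz.1 (sq_nonneg z.1)
      simp only [Pi.zero_apply]
      linarith [hz.2]
  constructor
  · refine h.mono' (Measurable.aestronglyMeasurable (by fun_prop)) ?_
    filter_upwards [ae1 B] with z hz
    have := le_min hz.1 (sq_nonneg z.1)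
    rw [Real.norm_of_nonneg this]; linarith [hz.2]
  · refine h.mono' (Measurable.aestronglyMeasurable (by fun_prop)) ?_
    filter_upwards [ae1 B] with z hz
    have := le_min hz.1 (sq_nonneg z.1)
    rw [Real.norm_of_nonneg hz.2]; linarith [hz.2]

lemma int2 (B : BranchingMechanism) :
    Integrable (fun z : ℝ × ℝ => z.1) B.n2 ∧
    Integrable (fun z : ℝ × ℝ => z.2) B.n2 := by
  have h : Integrable (fun z : ℝ × ℝ => z.1 + |z.2|) B.n2 := by
    refine (lintegral_ofReal_ne_top_iff_integrable ?_ ?_).1 B.n2_moment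
    · exact Measurable.aestronglyMeasurable (by fun_prop)
    · filter_upwards [ae2 B] with z hz
      simp only [Pi.zero_apply]
      linarith [hz.1, abs_nonneg z.2]
  constructor
  · refine h.mono' (Measurable.aestronglyMeasurable (by fun_prop)) ?_
    filter_upwards [ae2 B] with z hz
    rw [Real.norm_of_nonneg hz.1]; linarith [abs_nonneg z.2]
  · refine h.mono' (Measurable.aestronglyMeasurable (by fun_prop)) ?_
    filter_upwards [ae2 B] with z hz
    rw [Real.norm_eq_abs]; linarith [hz.1]

lemma exp_aux (x : ℝ) (hx : 0 ≤ x) : Real.exp (-x) - 1 + x ≤ x ^ 2 := by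
  have h1 : 1 + x ≤ Real.exp x := by linarith [Real.add_one_le_exp x]
  have h2 : Real.exp (-x) ≤ 1 / (1 + x) := by
    rw [Real.exp_neg, ← one_div]
    exact one_div_le_one_div_of_le (by linarith) h1
  have h3 : 1 / (1 + x) ≤ 1 - x + x ^ 2 := by
    rw [div_le_iff₀ (by linarith)]
    nlinarith [pow_nonneg hx 3]
  linarith

lemma up1 {v1 v2 K a b : ℝ} (hv1 : 0 ≤ v1) (hK : v1 ≤ K) (hv2 : 0 ≤ v2)
    (ha : 0 ≤ a) (hb : 0 ≤ b) :
    Real.exp (-(v1 * a + v2 * b)) - 1 + v1 * a ≤ (v1 * (1 + K)) * min a (a ^ 2) := by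
  have hx : 0 ≤ v1 * a := mul_nonneg hv1 ha
  have hy : 0 ≤ v2 * b := mul_nonneg hv2 hb
  have h0 : Real.exp (-(v1 * a + v2 * b)) ≤ Real.exp (-(v1 * a)) :=
    Real.exp_le_exp.2 (by linarith)
  have h1 := exp_aux _ hx
  have h2 : Real.exp (-(v1 * a)) ≤ 1 := Real.exp_le_one_iff.2 (by linarith)
  have hvK : 0 ≤ v1 * K := mul_nonneg hv1 (hv1.trans hK)
  rcases min_cases a (a ^ 2) with ⟨h, _⟩ | ⟨h, _⟩ <;> rw [h]
  · nlinarith [mul_nonneg hvK ha]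
  · have : v1 * v1 * a ^ 2 ≤ v1 * K * a ^ 2 := by gcongr
    nlinarith [mul_nonneg hv1 (sq_nonneg a)]

lemma low1 (v1 v2 a b : ℝ) :
    -(v2 * b) ≤ Real.exp (-(v1 * a + v2 * b)) - 1 + v1 * a := by
  linarith [Real.add_one_le_exp (-(v1 * a + v2 * b))]

lemma up2 (v1 v2 a b : ℝ) :
    1 - Real.exp (-(v1 * a + v2 * b)) ≤ v1 * a + v2 * b := by
  linarith [Real.add_one_le_exp (-(v1 * a + v2 * b))]

lemma low2 {v1 v2 K a b : ℝ} (hv1 : 0 ≤ v1) (hv2 : 0 ≤ v2) (hK : v2 ≤ K)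
    (ha : 0 ≤ a) (hb : 0 ≤ b ∨ b = -1) :
    -(v2 * Real.exp K) * |b| ≤ 1 - Real.exp (-(v1 * a + v2 * b)) := by
  have hx : 0 ≤ v1 * a := mul_nonneg hv1 ha
  rcases hb with hb | hb
  · have hy : 0 ≤ v2 * b := mul_nonneg hv2 hb
    have h2 : Real.exp (-(v1 * a + v2 * b)) ≤ 1 := Real.exp_le_one_iff.2 (by linarith)
    have : 0 ≤ v2 * Real.exp K * |b| := by positivity
    linarith
  · subst hb
    have h0 : Real.exp (-(v1 * a + v2 * (-1))) ≤ Real.exp v2 :=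
      Real.exp_le_exp.2 (by linarith)
    have h1 : (1 - v2) * Real.exp v2 ≤ 1 := by
      have := Real.add_one_le_exp (-v2)
      calc (1 - v2) * Real.exp v2 ≤ Real.exp (-v2) * Real.exp v2 := by
            gcongr; linarith
        _ = 1 := by rw [← Real.exp_add]; simp
    have h2 : v2 * Real.exp v2 ≤ v2 * Real.exp K := by gcongr
    simp only [abs_neg, abs_one]
    nlinarith

lemma bd1 {v1 v2 K a b : ℝ} (hv1 : 0 ≤ v1) (hK : v1 ≤ K) (hv2 : 0 ≤ v2) (hK2 : v2 ≤ K)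
    (ha : 0 ≤ a) (hb : 0 ≤ b) :
    ‖Real.exp (-(v1 * a + v2 * b)) - 1 + v1 * a‖ ≤ (K * (1 + K)) * min a (a ^ 2) + K * b := by
  have hm := le_min ha (sq_nonneg a)
  have hK0 : 0 ≤ K := hv1.trans hK
  have h1 := up1 hv1 hK hv2 ha hb
  have h2 := low1 v1 v2 a b
  have h3 : (v1 * (1 + K)) * min a (a ^ 2) ≤ (K * (1 + K)) * min a (a ^ 2) := by gcongr
  have h4 : v2 * b ≤ K * b := by gcongr
  have h5 : 0 ≤ (K * (1 + K)) * min a (a ^ 2) := by positivity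
  have h6 : 0 ≤ K * b := by positivity
  rw [Real.norm_eq_abs, abs_le]
  constructor <;> linarith

lemma bd2 {v1 v2 K a b : ℝ} (hv1 : 0 ≤ v1) (hK : v1 ≤ K) (hv2 : 0 ≤ v2) (hK2 : v2 ≤ K)
    (ha : 0 ≤ a) (hb : 0 ≤ b ∨ b = -1) :
    ‖1 - Real.exp (-(v1 * a + v2 * b))‖ ≤ K * a + (K + K * Real.exp K) * |b| := by
  have hK0 : 0 ≤ K := hv1.trans hK
  have h1 := low2 hv1 hv2 hK2 ha hb
  have h2 := up2 v1 v2 a b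
  have h3 : v1 * a ≤ K * a := by gcongr
  have h4 : v2 * b ≤ K * |b| :=
    (mul_le_mul_of_nonneg_left (le_abs_self b) hv2).trans (by gcongr)
  have h5 : v2 * Real.exp K * |b| ≤ K * Real.exp K * |b| := by gcongr
  have h6 : 0 ≤ K * Real.exp K * |b| := by positivity
  have h7 : 0 ≤ K * |b| := by positivity
  have h8 : 0 ≤ K * a := by positivity
  rw [Real.norm_eq_abs, abs_le]
  constructor <;> linarith

lemma bint1 (B : BranchingMechanism) (c d : ℝ) :
    Integrable (fun z : ℝ × ℝ => c * min z.1 (z.1 ^ 2) + d * z.2) B.n1 :=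
  ((int1 B).1.const_mul c).add ((int1 B).2.const_mul d)

lemma bint2 (B : BranchingMechanism) (c d : ℝ) :
    Integrable (fun z : ℝ × ℝ => c * z.1 + d * |z.2|) B.n2 :=
  ((int2 B).1.const_mul c).add ((int2 B).2.abs.const_mul d)

lemma iint1 (B : BranchingMechanism) {v1 v2 : ℝ} (h1 : 0 ≤ v1) (h2 : 0 ≤ v2) :
    Integrable (fun z : ℝ × ℝ => Real.exp (-(v1 * z.1 + v2 * z.2)) - 1 + v1 * z.1) B.n1 := by
  refine (bint1 B (max v1 v2 * (1 + max v1 v2)) (max v1 v2)).mono'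
    (Measurable.aestronglyMeasurable (by fun_prop)) ?_
  filter_upwards [ae1 B] with z hz
  exact bd1 h1 (le_max_left _ _) h2 (le_max_right _ _) hz.1 hz.2

lemma iint2 (B : BranchingMechanism) {v1 v2 : ℝ} (h1 : 0 ≤ v1) (h2 : 0 ≤ v2) :
    Integrable (fun z : ℝ × ℝ => 1 - Real.exp (-(v1 * z.1 + v2 * z.2))) B.n2 := by
  refine (bint2 B (max v1 v2) (max v1 v2 + max v1 v2 * Real.exp (max v1 v2))).mono'
    (Measurable.aestronglyMeasurable (by fun_prop)) ?_
  filter_upwards [ae2 B] with z hz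
  exact bd2 h1 (le_max_left _ _) h2 (le_max_right _ _) hz.1 hz.2

lemma ev_bd {W : ℝ → ℝ × ℝ} (hW : Continuous W) (s0 : ℝ) :
    ∃ K, ∀ᶠ s in nhds s0, (W s).1 ≤ K ∧ (W s).2 ≤ K := by
  refine ⟨max (W s0).1 (W s0).2 + 1, ?_⟩
  have h1 : Continuous fun s => (W s).1 := by fun_prop
  have h2 : Continuous fun s => (W s).2 := by fun_prop
  have e1 := h1.continuousAt.eventually_lt (continuousAt_const (x := s0)
    (y := max (W s0).1 (W s0).2 + 1)) (by linarith [le_max_left (W s0).1 (W s0).2])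
  have e2 := h2.continuousAt.eventually_lt (continuousAt_const (x := s0)
    (y := max (W s0).1 (W s0).2 + 1)) (by linarith [le_max_right (W s0).1 (W s0).2])
  filter_upwards [e1, e2] with s a b using ⟨a.le, b.le⟩

lemma cont1 (B : BranchingMechanism) {W : ℝ → ℝ × ℝ} (hW : Continuous W)
    (h0 : ∀ s, 0 ≤ (W s).1 ∧ 0 ≤ (W s).2) : Continuous fun s => mPhi1 B (W s) := by
  unfold mPhi1
  refine Continuous.sub (by fun_prop) ?_
  rw [continuous_iff_continuousAt]
  intro s0
  obtain ⟨K, hK⟩ := ev_bd hW s0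
  refine continuousAt_of_dominated (bound := fun z => (K * (1 + K)) * min z.1 (z.1 ^ 2) + K * z.2)
    ?_ ?_ (bint1 B _ _) ?_
  · exact Eventually.of_forall fun s => Measurable.aestronglyMeasurable (by fun_prop)
  · filter_upwards [hK] with s hs
    filter_upwards [ae1 B] with z hz
    exact bd1 (h0 s).1 hs.1 (h0 s).2 hs.2 hz.1 hz.2
  · exact Eventually.of_forall fun z => Continuous.continuousAt (by fun_prop)

lemma cont2 (B : BranchingMechanism) {W : ℝ → ℝ × ℝ} (hW : Continuous W)
    (h0 : ∀ s, 0 ≤ (W s).1 ∧ 0 ≤ (W s).2) : Continuous fun s => mPhi2 B (W s) := by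
  unfold mPhi2
  refine Continuous.add (by fun_prop) ?_
  rw [continuous_iff_continuousAt]
  intro s0
  obtain ⟨K, hK⟩ := ev_bd hW s0
  refine continuousAt_of_dominated (bound := fun z => K * z.1 + (K + K * Real.exp K) * |z.2|)
    ?_ ?_ (bint2 B _ _) ?_
  · exact Eventually.of_forall fun s => Measurable.aestronglyMeasurable (by fun_prop)
  · filter_upwards [hK] with s hs
    filter_upwards [ae2 B] with z hz
    exact bd2 (h0 s).1 hs.1 (h0 s).2 hs.2 hz.1 hz.2
  · exact Eventually.of_forall fun z => Continuous.continuousAt (by fun_prop)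

lemma phi1_le (B : BranchingMechanism) {v : ℝ × ℝ} (h1 : 0 ≤ v.1) (h2 : 0 ≤ v.2) :
    mPhi1 B v ≤ H11 B * v.1 + H12 B * v.2 := by
  have h : ∫ z, -(v.2 * z.2) ∂B.n1 ≤
      ∫ z, (Real.exp (-(v.1 * z.1 + v.2 * z.2)) - 1 + v.1 * z.1) ∂B.n1 :=
    integral_mono ((int1 B).2.const_mul _).neg (iint1 B h1 h2) fun z => low1 _ _ _ _
  rw [integral_neg, integral_const_mul] at h
  unfold mPhi1 H11 H12
  have := mul_nonneg B.alpha_nonneg (sq_nonneg v.1)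
  linarith

lemma phi2_le (B : BranchingMechanism) {v : ℝ × ℝ} (h1 : 0 ≤ v.1) (h2 : 0 ≤ v.2) :
    mPhi2 B v ≤ H21 B * v.1 + H22 B * v.2 := by
  have h : ∫ z, (1 - Real.exp (-(v.1 * z.1 + v.2 * z.2))) ∂B.n2 ≤
      ∫ z, (v.1 * z.1 + v.2 * z.2) ∂B.n2 :=
    integral_mono (iint2 B h1 h2) (((int2 B).1.const_mul _).add ((int2 B).2.const_mul _))
      fun z => up2 _ _ _ _
  rw [integral_add ((int2 B).1.const_mul _) ((int2 B).2.const_mul _),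
    integral_const_mul, integral_const_mul] at h
  unfold mPhi2 H21 H22
  linarith

lemma phi1_ge (B : BranchingMechanism) (K : ℝ) :
    ∃ A : ℝ, 0 < A ∧ ∀ v : ℝ × ℝ, 0 ≤ v.1 → 0 ≤ v.2 → v.1 ≤ K → -A * v.1 ≤ mPhi1 B v := by
  set m := ∫ z, min z.1 (z.1 ^ 2) ∂B.n1
  refine ⟨|B.a11 + B.alpha * K + (1 + K) * m| + 1, by positivity, ?_⟩
  intro v h1 h2 hK
  have h : ∫ z, (Real.exp (-(v.1 * z.1 + v.2 * z.2)) - 1 + v.1 * z.1) ∂B.n1 ≤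
      ∫ z, (v.1 * (1 + K)) * min z.1 (z.1 ^ 2) ∂B.n1 := by
    refine integral_mono_ae (iint1 B h1 h2) ((int1 B).1.const_mul _) ?_
    filter_upwards [ae1 B] with z hz
    exact up1 h1 hK h2 hz.1 hz.2
  rw [integral_const_mul] at h
  unfold mPhi1
  have h3 : B.alpha * v.1 ^ 2 ≤ B.alpha * (v.1 * K) :=
    mul_le_mul_of_nonneg_left (by nlinarith) B.alpha_nonneg
  have h4 := mul_le_mul_of_nonneg_right (le_abs_self (B.a11 + B.alpha * K + (1 + K) * m)) h1
  change _ ≤ v.1 * (1 + K) * m at h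
  nlinarith

lemma phi2_ge (B : BranchingMechanism) (K : ℝ) :
    ∃ A : ℝ, 0 < A ∧ ∀ v : ℝ × ℝ, 0 ≤ v.1 → 0 ≤ v.2 → v.2 ≤ K → -A * v.2 ≤ mPhi2 B v := by
  set m := ∫ z, |z.2| ∂B.n2
  have hm : 0 ≤ m := integral_nonneg fun z => abs_nonneg _
  refine ⟨Real.exp K * m + 1, by positivity, ?_⟩
  intro v h1 h2 hK
  have h : ∫ z, -(v.2 * Real.exp K) * |z.2| ∂B.n2 ≤
      ∫ z, (1 - Real.exp (-(v.1 * z.1 + v.2 * z.2))) ∂B.n2 := by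
    refine integral_mono_ae ((int2 B).2.abs.const_mul _) (iint2 B h1 h2) ?_
    filter_upwards [ae2 B] with z hz
    exact low2 h1 h2 hK hz.1 hz.2
  rw [integral_const_mul] at h
  unfold mPhi2
  have := mul_nonneg B.a21_nonneg h1
  change -(v.2 * Real.exp K) * m ≤ _ at h
  nlinarith

lemma weights (B : BranchingMechanism)
    (hspec : ∀ μ : ℂ, μ ∈ spectrum ℂ ((Hmat B).map (Complex.ofReal ·)) → μ.re < 0) :
    ∃ w1 w2 : ℝ, 0 < w1 ∧ 0 < w2 ∧ w1 * H11 B + w2 * H21 B ≤ 0 ∧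
      w1 * H12 B + w2 * H22 B ≤ 0 := by
  have h12 : 0 ≤ H12 B := integral_nonneg_of_ae (by
    filter_upwards [ae1 B] with z hz using hz.2)
  have h21 : 0 ≤ H21 B := add_nonneg B.a21_nonneg (integral_nonneg_of_ae (by
    filter_upwards [ae2 B] with z hz using hz.1))
  set a := H11 B with ha
  set b := H12 B with hb
  set c := H21 B with hc
  set d := H22 B with hd
  set D := (a - d) ^ 2 + 4 * (b * c) with hD
  have hbc := mul_nonneg h12 h21
  have hD0 : 0 ≤ D := by positivity
  have hs := Real.sq_sqrt hD0
  have hs0 := Real.sqrt_nonneg D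
  set r := Real.sqrt D
  have key : (a + d + r) / 2 < 0 := by
    have := hspec (((a + d + r) / 2 : ℝ) : ℂ) (by
      rw [spectrum.mem_iff, Matrix.isUnit_iff_isUnit_det, isUnit_iff_ne_zero, not_not,
        Matrix.det_fin_two]
      simp only [Hmat, Matrix.sub_apply, Matrix.map_apply, Matrix.algebraMap_matrix_apply,
        Matrix.of_apply, Matrix.cons_val', Matrix.cons_val_zero, Matrix.cons_val_one,
        Matrix.cons_val_fin_one]
      norm_num [← ha, ← hb, ← hc, ← hd]
      have : ((a + d + r) / 2 - a) * ((a + d + r) / 2 - d) - b * c = 0 := by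
        nlinarith
      have t : ((((a + d + r) / 2 - a) * ((a + d + r) / 2 - d) - b * c : ℝ) : ℂ) = 0 := by
        rw [this, Complex.ofReal_zero]
      simp only [Complex.ofReal_sub, Complex.ofReal_mul, Complex.ofReal_div, Complex.ofReal_add,
        Complex.ofReal_ofNat] at t
      exact t)
    simpa using this
  have hdet : b * c < a * d := by nlinarith
  have ha0 : a < 0 := by nlinarith
  have hd0 : d < 0 := by nlinarith
  exact ⟨c - d, b - a, by linarith, by linarith, by nlinarith, by nlinarith⟩

lemma growth {u f : ℝ → ℝ} {A : ℝ} (hu : ∀ t, HasDerivAt u (f t) t)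
    (h : ∀ t, 0 ≤ t → -A * u t ≤ f t) (t : ℝ) (ht : 0 ≤ t) :
    u 0 * Real.exp (-A * t) ≤ u t := by
  have hd : ∀ s, HasDerivAt (fun s => u s * Real.exp (A * s))
      (f s * Real.exp (A * s) + u s * (Real.exp (A * s) * (A * 1))) s := fun s =>
    (hu s).mul (((hasDerivAt_id s).const_mul A).exp)
  have hm : MonotoneOn (fun s => u s * Real.exp (A * s)) (Ici 0) := by
    refine monotoneOn_of_deriv_nonneg (convex_Ici 0)
      (fun s _ => (hd s).continuousAt.continuousWithinAt)
      (fun s _ => (hd s).differentiableAt.differentiableWithinAt) ?_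
    intro s hs
    rw [interior_Ici] at hs
    rw [(hd s).deriv]
    have := h s (le_of_lt hs)
    have e := Real.exp_pos (A * s)
    nlinarith
  have := hm (mem_Ici.2 le_rfl) (mem_Ici.2 ht) ht
  simp only [mul_zero, Real.exp_zero, mul_one] at this
  calc u 0 * Real.exp (-A * t) ≤ (u t * Real.exp (A * t)) * Real.exp (-A * t) := by gcongr
    _ = u t := by rw [mul_assoc, ← Real.exp_add]; simp

end CumulantAux

open CumulantAux in
/-- If all eigenvalues of `H` have strictly negative real parts, then
for every `λ ∈ [0,∞)²` there are `A(λ), B(λ) > 0` with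
`V₁(t,λ) ≥ λ₁ e^{-A(λ)t}` and `V₂(t,λ) ≥ λ₂ e^{-B(λ)t}` for all `t ≥ 0`. -/
theorem cumulant_exponential_lower_bound (B : BranchingMechanism)
    (V : ℝ → (ℝ × ℝ) → ℝ × ℝ)
    (hV : ∀ l : ℝ × ℝ, 0 ≤ l.1 → 0 ≤ l.2 → SolvesCumulant B l (fun t => V t l))
    (hspec : ∀ μ : ℂ, μ ∈ spectrum ℂ ((Hmat B).map (Complex.ofReal ·)) → μ.re < 0) :
    ∀ l : ℝ × ℝ, 0 ≤ l.1 → 0 ≤ l.2 →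
      ∃ A : ℝ, 0 < A ∧ ∃ B' : ℝ, 0 < B' ∧
        ∀ t : ℝ, 0 ≤ t →
          l.1 * Real.exp (-A * t) ≤ (V t l).1 ∧
          l.2 * Real.exp (-B' * t) ≤ (V t l).2 := by
  intro l hl1 hl2
  obtain ⟨hc, hn, he⟩ := hV l hl1 hl2
  obtain ⟨w1, w2, hw1, hw2, hwa, hwb⟩ := weights B hspec
  let W : ℝ → ℝ × ℝ := fun s => V (max s 0) l
  have hW : Continuous W :=
    hc.comp_continuous (f := fun s : ℝ => max s 0) (by fun_prop) fun s => le_max_right s 0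
  have h0 : ∀ s, 0 ≤ (W s).1 ∧ 0 ≤ (W s).2 := fun s => hn _ (le_max_right s 0)
  have hWV : ∀ s, 0 ≤ s → W s = V s l := fun s hs => by simp only [W, max_eq_left hs]
  let u1 : ℝ → ℝ := fun t => l.1 + ∫ s in (0:ℝ)..t, mPhi1 B (W s)
  let u2 : ℝ → ℝ := fun t => l.2 + ∫ s in (0:ℝ)..t, mPhi2 B (W s)
  have d1 : ∀ t, HasDerivAt u1 (mPhi1 B (W t)) t := fun t =>
    ((cont1 B hW h0).integral_hasStrictDerivAt 0 t).hasDerivAt.const_add _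
  have d2 : ∀ t, HasDerivAt u2 (mPhi2 B (W t)) t := fun t =>
    ((cont2 B hW h0).integral_hasStrictDerivAt 0 t).hasDerivAt.const_add _
  have e1 : ∀ t, 0 ≤ t → u1 t = (W t).1 := by
    intro t ht
    rw [hWV t ht]
    refine Eq.trans ?_ (he t ht).1.symm
    simp only [u1]
    congr 1
    refine intervalIntegral.integral_congr fun s hs => ?_
    rw [uIcc_of_le ht] at hs
    simp only [hWV s hs.1]
  have e2 : ∀ t, 0 ≤ t → u2 t = (W t).2 := by
    intro t ht
    rw [hWV t ht]
    refine Eq.trans ?_ (he t ht).2.symm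
    simp only [u2]
    congr 1
    refine intervalIntegral.integral_congr fun s hs => ?_
    rw [uIcc_of_le ht] at hs
    simp only [hWV s hs.1]
  have z1 : u1 0 = l.1 := by simp [u1]
  have z2 : u2 0 = l.2 := by simp [u2]
  have hb : ∀ t, 0 ≤ t → w1 * (W t).1 + w2 * (W t).2 ≤ w1 * l.1 + w2 * l.2 := by
    intro t ht
    have hd : ∀ s, HasDerivAt (fun s => -(w1 * u1 s + w2 * u2 s))
        (-(w1 * mPhi1 B (W s) + w2 * mPhi2 B (W s))) s := fun s =>
      (((d1 s).const_mul w1).add ((d2 s).const_mul w2)).neg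
    have := growth (A := 0) hd (fun s _ => by
      have p1 := mul_le_mul_of_nonneg_left (phi1_le B (h0 s).1 (h0 s).2) hw1.le
      have p2 := mul_le_mul_of_nonneg_left (phi2_le B (h0 s).1 (h0 s).2) hw2.le
      have q1 := mul_nonpos_of_nonpos_of_nonneg hwa (h0 s).1
      have q2 := mul_nonpos_of_nonpos_of_nonneg hwb (h0 s).2
      nlinarith) t ht
    simp only [neg_zero, zero_mul, Real.exp_zero, mul_one, z1, z2, e1 t ht, e2 t ht] at this
    linarith
  set S := w1 * l.1 + w2 * l.2
  obtain ⟨A, hA, hA'⟩ := phi1_ge B (S / w1)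
  obtain ⟨C, hC, hC'⟩ := phi2_ge B (S / w2)
  refine ⟨A, hA, C, hC, fun t ht => ?_⟩
  rw [← hWV t ht, ← e1 t ht, ← e2 t ht, ← z1, ← z2]
  constructor
  · refine growth d1 (fun s hs => ?_) t ht
    rw [e1 s hs]
    refine hA' _ (h0 s).1 (h0 s).2 ?_
    rw [le_div_iff₀ hw1]
    nlinarith [hb s hs, mul_nonneg hw2.le (h0 s).2]
  · refine growth d2 (fun s hs => ?_) t ht
    rw [e2 s hs]
    refine hC' _ (h0 s).1 (h0 s).2 ?_
    rw [le_div_iff₀ hw2]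
    nlinarith [hb s hs, mul_nonneg hw1.le (h0 s).1]
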